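/- Let N ⊆ M_m be a unital *-subalgebra and suppose D(M_m‖N) < ∞. If ρ and σ are densities in M_m with ‖ρ − σ‖_1 = ε, then |D(ρ‖N) − D(σ‖N)| ≤ 2ε · D(M_m‖N) + (1 + 2ε) · h(2ε/(1 + 2ε)), where h(λ) = −λ log λ − (1−λ) log(1−λ) is the binary entropy function. -/

import Mathlib

open scoped ENNReal Classical ComplexOrder
open Matrix

noncomputable section

namespace GJL

variable {n : Type*} [Fintype n] [DecidableEq n]

/-- `Mat n` is the matrix *-algebra with rows and columns indexed by `n`. -/
abbrev Mat (n : Type*) [Fintype n] [DecidableEq n] := Matrix n n ℂ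

/-- A density matrix: positive semidefinite with trace one. -/
def IsDensity (ρ : Mat n) : Prop := ρ.PosSemidef ∧ ρ.trace = 1

/-- The real part of the (matrix) trace. -/
def traceR (A : Mat n) : ℝ := (A.trace).re

/-- Real matrix powers via the continuous functional calculus.  For positive
semidefinite matrices and negative exponents this is the generalized inverse
power on the support, since `(0 : ℝ) ^ r = 0` for `r ≠ 0`. -/
def mpow (A : Mat n) (r : ℝ) : Mat n := cfc (fun x : ℝ => x ^ r) A

/-- Matrix logarithm on the support (`Real.log 0 = 0`). -/
def mlog (A : Mat n) : Mat n := cfc Real.log A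

/-- Schatten `p`-norm `(Tr ((x* x)^(p/2)))^(1/p)`. -/
def snorm (p : ℝ) (x : Mat n) : ℝ := (traceR (mpow (xᴴ * x) (p/2))) ^ (1/p)

/-- Operator norm `‖x‖_∞`. -/
def opNorm (x : Mat n) : ℝ := ‖(Matrix.toEuclideanCLM (𝕜 := ℂ) x : EuclideanSpace ℂ n →L[ℂ] EuclideanSpace ℂ n)‖

/-- The support projection of `ρ` is dominated by that of `σ` (for positive
semidefinite matrices: `ker σ ⊆ ker ρ`). -/
def suppLe (ρ σ : Mat n) : Prop := ∀ v, σ.mulVec v = 0 → ρ.mulVec v = 0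

/-- `e` is the support projection of `ρ`. -/
def IsSupportProj (ρ e : Mat n) : Prop :=
  e.IsHermitian ∧ e * e = e ∧ ∀ v, e.mulVec v = 0 ↔ ρ.mulVec v = 0

/-- `D_∞(ρ‖σ) = log min {λ ≥ 0 | ρ ≤ λ σ}`, `⊤` if no such `λ` exists. -/
def Dinf (ρ σ : Mat n) : EReal :=
  if ∃ c : ℝ, 0 ≤ c ∧ (c • σ - ρ).PosSemidef then
    ((Real.log (sInf {c : ℝ | 0 ≤ c ∧ (c • σ - ρ).PosSemidef}) : ℝ) : EReal)
  else ⊤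

/-- Umegaki relative entropy `D(ρ‖σ) = Tr(ρ log ρ - ρ log σ)`, `⊤` if the
support condition fails. -/
def DU (ρ σ : Mat n) : EReal :=
  if suppLe ρ σ then ((traceR (ρ * mlog ρ - ρ * mlog σ) : ℝ) : EReal) else ⊤

/-- The sandwiched matrix `σ^{(1-p)/(2p)} ρ σ^{(1-p)/(2p)}`; note that for
`p > 1` the exponent `(1-p)/(2p)` equals `-1/(2p')` with `1/p + 1/p' = 1`. -/
def sandwich (p : ℝ) (ρ σ : Mat n) : Mat n :=
  mpow σ ((1 - p)/(2*p)) * ρ * mpow σ ((1 - p)/(2*p))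

/-- The sandwiched Rényi relative entropy `D_p(ρ‖σ)` for `p ∈ [1/2, ∞]`:
for `p ∈ (1,∞)` it is `p' log ‖σ^{-1/(2p')} ρ σ^{-1/(2p')}‖_p
= (p-1)⁻¹ log Tr ((σ^{-1/(2p')} ρ σ^{-1/(2p')})^p)` when the support of `ρ` is
dominated by that of `σ` and `⊤` otherwise; for `p ∈ [1/2, 1)` it is
`(p-1)⁻¹ log Tr ((σ^{(1-p)/(2p)} ρ σ^{(1-p)/(2p)})^p)` (`⊤` when the trace
vanishes, i.e. when the honest value is `+∞`); `D_1` is the Umegaki relative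
entropy and `D_∞` the max-relative entropy. -/
def Dp (p : ℝ≥0∞) (ρ σ : Mat n) : EReal :=
  if p = ⊤ then Dinf ρ σ
  else if p = 1 then DU ρ σ
  else if 1 < p.toReal ∧ ¬ suppLe ρ σ then ⊤
  else if traceR (mpow (sandwich p.toReal ρ σ) p.toReal) = 0 then ⊤
  else (((p.toReal - 1)⁻¹ * Real.log (traceR (mpow (sandwich p.toReal ρ σ) p.toReal)) : ℝ) : EReal)

/-- `D_p(ρ‖S) = inf { D_p(ρ‖σ) | σ a density in S }`. -/
def DpSet (p : ℝ≥0∞) (ρ : Mat n) (S : Set (Mat n)) : EReal :=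
  ⨅ σ ∈ {σ ∈ S | IsDensity σ}, Dp p ρ σ

/-- `D_p(A‖S) = sup { D_p(ρ‖S) | ρ a density in A }`. -/
def DpRel (p : ℝ≥0∞) (A S : Set (Mat n)) : EReal :=
  ⨆ ρ ∈ {ρ ∈ A | IsDensity ρ}, DpSet p ρ S

open scoped Kronecker in
/-- The algebraic tensor product `N₁ ⊗ N₂ ⊆ M_{n₁} ⊗ M_{n₂} = M_{n₁ × n₂}`,
realized as the linear span of Kronecker products. -/
def tensorSpan {n₁ n₂ : Type*} [Fintype n₁] [DecidableEq n₁] [Fintype n₂] [DecidableEq n₂]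
    (N₁ : Set (Mat n₁)) (N₂ : Set (Mat n₂)) : Set (Mat (n₁ × n₂)) :=
  ↑(Submodule.span ℂ {z : Mat (n₁ × n₂) | ∃ x ∈ N₁, ∃ y ∈ N₂, z = x ⊗ₖ y})

/-- `D_{p,cb}(M‖N) = sup_k D_p(M_k ⊗ M ‖ M_k ⊗ N)`. -/
def DpCb (p : ℝ≥0∞) (N : Set (Mat n)) : EReal :=
  ⨆ k : ℕ, DpRel p Set.univ (tensorSpan (Set.univ : Set (Mat (Fin k))) N)

/-- `E` is the trace preserving conditional expectation onto `N`, i.e. the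
orthogonal projection onto `N` with respect to the Hilbert–Schmidt inner
product `⟨x,y⟩ = Tr(x* y)`. -/
def IsCondExp (N : Set (Mat n)) (E : Mat n →ₗ[ℂ] Mat n) : Prop :=
  (∀ x, E x ∈ N) ∧ (∀ x ∈ N, E x = x) ∧
    ∀ x y, y ∈ N → ((E x)ᴴ * y).trace = (xᴴ * y).trace

/-- The Pimsner–Popa index constant
`λ(M:N) = max {c ≥ 0 | c x ≤ E(x) for all x ≥ 0}`. -/
def ppIndex (E : Mat n →ₗ[ℂ] Mat n) : ℝ :=
  sSup {c : ℝ | 0 ≤ c ∧ ∀ x : Mat n, x.PosSemidef → (E x - c • x).PosSemidef}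

/-- von Neumann entropy `H(ρ) = -Tr(ρ log ρ)`. -/
def vnEntropy (ρ : Mat n) : ℝ := - traceR (ρ * mlog ρ)

/-- The amplification `id_{M_k} ⊗ Φ` acting on `M_k ⊗ M_n = M_{k × n}`,
applying `Φ` blockwise. -/
def ampFun (k : Type*) [Fintype k] [DecidableEq k] (Φ : Mat n →ₗ[ℂ] Mat n)
    (X : Mat (k × n)) : Mat (k × n) :=
  Matrix.of fun a b => Φ (Matrix.of fun s t => X (a.1, s) (b.1, t)) a.2 b.2

/-- Complete positivity: all amplifications `id_{M_k} ⊗ Φ` preserve positive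
semidefiniteness. -/
def IsCP (Φ : Mat n →ₗ[ℂ] Mat n) : Prop :=
  ∀ (k : ℕ) (X : Mat (Fin k × n)), X.PosSemidef → (ampFun (Fin k) Φ X).PosSemidef

/-- Completely positive and trace preserving. -/
def IsCPTP (Φ : Mat n →ₗ[ℂ] Mat n) : Prop :=
  IsCP Φ ∧ ∀ x : Mat n, (Φ x).trace = x.trace

/-!
Winter's argument.  By the Jordan decomposition of `ρ - σ` there are densities `ω`, `ω'` with
`ρ + δ ω = σ + δ ω'`, where `δ = ‖ρ - σ‖₁ / 2`, so `ρ` and `σ` both occur in one mixture.  Joint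
convexity of the relative entropy bounds this mixture from above through near-optimal points for
`ρ` and `ω`; concavity in the first argument up to a binary entropy bounds it from below through
`σ` and `ω'`, and the `ω'` term is nonnegative.  This gives the bound
`δ D + (1 + δ) h (δ / (1 + δ))`, which increases with `δ`.

Joint convexity follows from `p (log p - log q) = ∫₀^∞ (p² / (q + s p) - p / (1 + s)) ds`, applied
to the commuting operators `R_A` and `L_B` of right and left multiplication: for each `s > 0` the
form `⟨A, (L_B + s R_A)⁻¹ A⟩` is a supremum of functions additive in `(A, B)`.
-/

lemma continuousOn_spectrum (f : ℝ → ℝ) (A : Mat n) : ContinuousOn f (spectrum ℝ A) :=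
  A.finite_real_spectrum.continuousOn f

lemma continuousOn_image_spectrum (f g : ℝ → ℝ) (A : Mat n) :
    ContinuousOn f (g '' spectrum ℝ A) :=
  (A.finite_real_spectrum.image g).continuousOn f

lemma traceR_add (A B : Mat n) : traceR (A + B) = traceR A + traceR B := by simp [traceR]

lemma traceR_sub (A B : Mat n) : traceR (A - B) = traceR A - traceR B := by simp [traceR]

lemma traceR_smul (c : ℝ) (A : Mat n) : traceR (c • A) = c * traceR A := by simp [traceR]

lemma traceR_nonneg {A : Mat n} (hA : A.PosSemidef) : 0 ≤ traceR A :=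
  (Complex.nonneg_iff.1 hA.trace_nonneg).1

lemma trace_eq_ofReal_traceR {A : Mat n} (hA : A.PosSemidef) : A.trace = (traceR A : ℂ) :=
  Complex.ext rfl (Complex.nonneg_iff.1 hA.trace_nonneg).2.symm

lemma IsDensity.traceR_eq_one {ρ : Mat n} (hρ : IsDensity ρ) : traceR ρ = 1 := by
  simp [traceR, hρ.2]

lemma convex_isDensity : Convex ℝ {ρ : Mat n | IsDensity ρ} := by
  intro ρ hρ σ hσ a b ha hb hab
  have hpos := (hρ.1.smul ha).add (hσ.1.smul hb)
  refine ⟨hpos, ?_⟩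
  rw [trace_eq_ofReal_traceR hpos, traceR_add, traceR_smul, traceR_smul, hρ.traceR_eq_one,
    hσ.traceR_eq_one, mul_one, mul_one, hab, Complex.ofReal_one]

lemma suppLe.trans {A B C : Mat n} (hAB : suppLe A B) (hBC : suppLe B C) : suppLe A C :=
  fun v hv => hAB v (hBC v hv)

lemma suppLe.smul {A B : Mat n} (h : suppLe A B) (c : ℝ) : suppLe (c • A) (c • B) := by
  intro v hv
  rcases eq_or_ne c 0 with rfl | hc
  · simp
  · rw [smul_mulVec, smul_eq_zero_iff_right hc] at hv
    rw [smul_mulVec, h v hv, smul_zero]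

lemma suppLe_smul_right (A : Mat n) {c : ℝ} (hc : c ≠ 0) : suppLe A (c • A) := by
  intro v hv
  rwa [smul_mulVec, smul_eq_zero_iff_right hc] at hv

lemma suppLe_add_right {A B : Mat n} (hA : A.PosSemidef) (hB : B.PosSemidef) :
    suppLe A (A + B) := by
  intro v hv
  have hsum : star v ⬝ᵥ A *ᵥ v + star v ⬝ᵥ B *ᵥ v = 0 := by
    rw [← dotProduct_add, ← add_mulVec, hv, dotProduct_zero]
  have hv' := ((add_eq_zero_iff_of_nonneg (hA.dotProduct_mulVec_nonneg v)
    (hB.dotProduct_mulVec_nonneg v)).1 hsum).1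
  exact (hA.dotProduct_mulVec_zero_iff v).1 hv'

lemma suppLe.add {A₁ A₂ B₁ B₂ : Mat n} (h₁ : suppLe A₁ B₁) (h₂ : suppLe A₂ B₂)
    (hB₁ : B₁.PosSemidef) (hB₂ : B₂.PosSemidef) : suppLe (A₁ + A₂) (B₁ + B₂) := by
  intro v hv
  have hv₁ := suppLe_add_right hB₁ hB₂ v hv
  have hv₂ := suppLe_add_right hB₂ hB₁ v (add_comm B₁ B₂ ▸ hv)
  rw [add_mulVec, h₁ v hv₁, h₂ v hv₂, add_zero]

lemma mul_mlog {A : Mat n} (hA : A.IsHermitian) :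
    A * mlog A = cfc (fun x : ℝ => x * Real.log x) A := by
  rw [cfc_mul _ _ A (continuousOn_spectrum _ _) (continuousOn_spectrum _ _),
    cfc_id' ℝ A hA.isSelfAdjoint, mlog]

/-- The matrix of `X` with respect to the eigenbases of `A` (columns) and `B` (rows). -/
def eigenbasisMatrix {A B : Mat n} (hA : A.IsHermitian) (hB : B.IsHermitian) (X : Mat n) : Mat n :=
  (hB.eigenvectorUnitary : Mat n)ᴴ * X * (hA.eigenvectorUnitary : Mat n)

/-- The joint functional calculus `Re ⟨1, φ(R_A, L_B) 1⟩`, with `R_A` and `L_B` the commuting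
right and left multiplications on the Hilbert–Schmidt space.  In eigenbases `A uᵢ = pᵢ uᵢ` and
`B vⱼ = qⱼ vⱼ` it is the sum of `φ pᵢ qⱼ` with the Nussbaum–Szkoła weights `|⟨vⱼ, uᵢ⟩|²`. -/
def jointTrace {A B : Mat n} (hA : A.IsHermitian) (hB : B.IsHermitian) (φ : ℝ → ℝ → ℝ) : ℝ :=
  ∑ i, ∑ j, Complex.normSq (eigenbasisMatrix hA hB 1 j i) * φ (hA.eigenvalues i) (hB.eigenvalues j)

section JointTrace

variable {A B : Mat n} (hA : A.IsHermitian) (hB : B.IsHermitian)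

lemma cfc_eq_mul_diagonal_mul (f : ℝ → ℝ) :
    cfc f A = (hA.eigenvectorUnitary : Mat n) * diagonal (fun i => (f (hA.eigenvalues i) : ℂ)) *
      (hA.eigenvectorUnitary : Mat n)ᴴ := by
  rw [hA.cfc_eq]
  rfl

lemma eigenbasisMatrix_mul_mul (Y : Mat n) :
    eigenbasisMatrix hA hB
      ((hB.eigenvectorUnitary : Mat n) * Y * (hA.eigenvectorUnitary : Mat n)ᴴ) = Y := by
  have hU : (hA.eigenvectorUnitary : Mat n)ᴴ * (hA.eigenvectorUnitary : Mat n) = 1 :=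
    Unitary.coe_star_mul_self hA.eigenvectorUnitary
  have hV : (hB.eigenvectorUnitary : Mat n)ᴴ * (hB.eigenvectorUnitary : Mat n) = 1 :=
    Unitary.coe_star_mul_self hB.eigenvectorUnitary
  simp only [eigenbasisMatrix, Matrix.mul_assoc, hU, Matrix.mul_one]
  rw [← Matrix.mul_assoc, hV, Matrix.one_mul]

lemma traceR_conjTranspose_mul_cfc_mul_mul_cfc (X Z : Mat n) (f g : ℝ → ℝ) :
    traceR (Xᴴ * cfc g B * Z * cfc f A) =
      ∑ i, ∑ j, f (hA.eigenvalues i) * g (hB.eigenvalues j) *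
        (star (eigenbasisMatrix hA hB X j i) * eigenbasisMatrix hA hB Z j i).re := by
  have hcyc : (Xᴴ * cfc g B * Z * cfc f A).trace =
      ((eigenbasisMatrix hA hB X)ᴴ * diagonal (fun j => (g (hB.eigenvalues j) : ℂ)) *
        eigenbasisMatrix hA hB Z * diagonal (fun i => (f (hA.eigenvalues i) : ℂ))).trace := by
    rw [cfc_eq_mul_diagonal_mul hA, cfc_eq_mul_diagonal_mul hB, ← Matrix.mul_assoc,
      Matrix.trace_mul_comm]
    simp only [eigenbasisMatrix, conjTranspose_mul, conjTranspose_conjTranspose, Matrix.mul_assoc]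
  rw [traceR, hcyc]
  rw [trace, Complex.re_sum]
  refine Finset.sum_congr rfl fun i _ => ?_
  rw [diag_apply, mul_diagonal, mul_apply, Finset.sum_mul, Complex.re_sum]
  refine Finset.sum_congr rfl fun j _ => ?_
  rw [mul_diagonal, conjTranspose_apply, ← Complex.re_ofReal_mul, Complex.ofReal_mul]
  ring_nf

lemma traceR_cfc_mul_cfc (f g : ℝ → ℝ) :
    traceR (cfc f A * cfc g B) = jointTrace hA hB fun p q => f p * g q := by
  have h := traceR_conjTranspose_mul_cfc_mul_mul_cfc hA hB 1 1 f g
  rw [conjTranspose_one, Matrix.one_mul, Matrix.mul_one, traceR, trace_mul_comm, ← traceR] at h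
  refine h.trans (Finset.sum_congr rfl fun i _ => Finset.sum_congr rfl fun j _ => ?_)
  rw [Complex.star_def, ← Complex.normSq_eq_conj_mul_self, Complex.ofReal_re, mul_comm]

lemma traceR_mul_cfc (g : ℝ → ℝ) :
    traceR (A * cfc g B) = jointTrace hA hB fun p q => p * g q := by
  rw [← traceR_cfc_mul_cfc hA hB (fun p => p) g, cfc_id' ℝ A hA.isSelfAdjoint]

lemma traceR_cfc_left (f : ℝ → ℝ) : traceR (cfc f A) = jointTrace hA hB fun p _ => f p := by
  simpa [cfc_const_one ℝ B hB.isSelfAdjoint] using traceR_cfc_mul_cfc hA hB f fun _ => 1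

lemma traceR_eq_jointTrace_left : traceR A = jointTrace hA hB fun p _ => p := by
  simpa [cfc_id' ℝ A hA.isSelfAdjoint] using traceR_cfc_left hA hB fun p => p

lemma traceR_eq_jointTrace_right : traceR B = jointTrace hA hB fun _ q => q := by
  simpa [cfc_const_one ℝ A hA.isSelfAdjoint, cfc_id' ℝ B hB.isSelfAdjoint] using
    traceR_cfc_mul_cfc hA hB (fun _ => 1) fun q => q

lemma jointTrace_sub (φ ψ : ℝ → ℝ → ℝ) :
    (jointTrace hA hB fun p q => φ p q - ψ p q) = jointTrace hA hB φ - jointTrace hA hB ψ := by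
  simp only [jointTrace, mul_sub, Finset.sum_sub_distrib]

lemma jointTrace_add (φ ψ : ℝ → ℝ → ℝ) :
    (jointTrace hA hB fun p q => φ p q + ψ p q) = jointTrace hA hB φ + jointTrace hA hB ψ := by
  simp only [jointTrace, mul_add, Finset.sum_add_distrib]

lemma jointTrace_const_mul (c : ℝ) (φ : ℝ → ℝ → ℝ) :
    (jointTrace hA hB fun p q => c * φ p q) = c * jointTrace hA hB φ := by
  simp only [jointTrace, Finset.mul_sum, mul_left_comm]

end JointTrace

/-- The pairs of eigenvalues `(p, q)` that carry weight in `jointTrace` for positive semidefinite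
matrices with `suppLe A B`. -/
def IsSupportedPair (p q : ℝ) : Prop := 0 ≤ p ∧ 0 ≤ q ∧ (q = 0 → p = 0)

lemma eigenbasisMatrix_one_eq_zero_or_isSupportedPair {A B : Mat n} (hA : A.PosSemidef)
    (hB : B.PosSemidef) (h : suppLe A B) (i j : n) :
    eigenbasisMatrix hA.1 hB.1 1 j i = 0 ∨
      IsSupportedPair (hA.1.eigenvalues i) (hB.1.eigenvalues j) := by
  by_cases hq : hB.1.eigenvalues j = 0
  · have hAv : A *ᵥ hB.1.eigenvectorBasis j = 0 := h _ <| by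
      rw [hB.1.mulVec_eigenvectorBasis, hq, zero_smul]
    have hvA : star ⇑(hB.1.eigenvectorBasis j) ᵥ* A = 0 := by
      simpa [hA.1.eq, hAv] using (star_mulVec A (hB.1.eigenvectorBasis j)).symm
    have hzero : (hA.1.eigenvalues i : ℂ) * eigenbasisMatrix hA.1 hB.1 1 j i = 0 := by
      calc _ = star ⇑(hB.1.eigenvectorBasis j) ⬝ᵥ A *ᵥ hA.1.eigenvectorBasis i := by
            rw [hA.1.mulVec_eigenvectorBasis, dotProduct_smul, Complex.real_smul,
              eigenbasisMatrix, Matrix.mul_one]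
            rfl
        _ = 0 := by
            rw [dotProduct_mulVec, hvA, zero_dotProduct]
    rcases mul_eq_zero.1 hzero with hp | hM
    · exact .inr ⟨hA.eigenvalues_nonneg i, hq.ge, fun _ => Complex.ofReal_eq_zero.1 hp⟩
    · exact .inl hM
  · exact .inr ⟨hA.eigenvalues_nonneg i, hB.eigenvalues_nonneg j, fun h0 => absurd h0 hq⟩

section SupportedPair

variable {A B : Mat n} (hA : A.PosSemidef) (hB : B.PosSemidef) (h : suppLe A B)
include h

lemma jointTrace_mono {φ ψ : ℝ → ℝ → ℝ} (hφψ : ∀ p q, IsSupportedPair p q → φ p q ≤ ψ p q) :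
    jointTrace hA.1 hB.1 φ ≤ jointTrace hA.1 hB.1 ψ := by
  refine Finset.sum_le_sum fun i _ => Finset.sum_le_sum fun j _ => ?_
  rcases eigenbasisMatrix_one_eq_zero_or_isSupportedPair hA hB h i j with hM | hpq
  · simp [hM]
  · exact mul_le_mul_of_nonneg_left (hφψ _ _ hpq) (Complex.normSq_nonneg _)

lemma jointTrace_congr {φ ψ : ℝ → ℝ → ℝ} (hφψ : ∀ p q, IsSupportedPair p q → φ p q = ψ p q) :
    jointTrace hA.1 hB.1 φ = jointTrace hA.1 hB.1 ψ :=
  (jointTrace_mono hA hB h fun p q hpq => (hφψ p q hpq).le).antisymm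
    (jointTrace_mono hA hB h fun p q hpq => (hφψ p q hpq).ge)

lemma hasDerivAt_jointTrace {φ : ℝ → ℝ → ℝ → ℝ} {φ' : ℝ → ℝ → ℝ} {t : ℝ}
    (hφ : ∀ p q, IsSupportedPair p q → HasDerivAt (fun s => φ s p q) (φ' p q) t) :
    HasDerivAt (fun s => jointTrace hA.1 hB.1 (φ s)) (jointTrace hA.1 hB.1 φ') t := by
  refine HasDerivAt.fun_sum fun i _ => HasDerivAt.fun_sum fun j _ => ?_
  rcases eigenbasisMatrix_one_eq_zero_or_isSupportedPair hA hB h i j with hM | hpq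
  · simpa [hM] using hasDerivAt_const t (0 : ℝ)
  · exact (hφ _ _ hpq).const_mul _

lemma tendsto_jointTrace {ι : Type*} {l : Filter ι} {φ : ι → ℝ → ℝ → ℝ} {ψ : ℝ → ℝ → ℝ}
    (hφ : ∀ p q, IsSupportedPair p q → Filter.Tendsto (fun s => φ s p q) l (nhds (ψ p q))) :
    Filter.Tendsto (fun s => jointTrace hA.1 hB.1 (φ s)) l (nhds (jointTrace hA.1 hB.1 ψ)) := by
  refine tendsto_finsetSum _ fun i _ => tendsto_finsetSum _ fun j _ => ?_
  rcases eigenbasisMatrix_one_eq_zero_or_isSupportedPair hA hB h i j with hM | hpq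
  · simpa only [hM, map_zero, zero_mul] using tendsto_const_nhds
  · exact (hφ _ _ hpq).const_mul _

end SupportedPair

/-- The relative entropy `Tr (A log A - A log B)` of positive semidefinite matrices of arbitrary
trace.  It is meaningful only under `suppLe A B`, where it is the value of `DU A B`. -/
def relEntropy (A B : Mat n) : ℝ := traceR (A * mlog A - A * mlog B)

lemma relEntropy_eq_sub (A B : Mat n) :
    relEntropy A B = traceR (A * mlog A) - traceR (A * mlog B) := traceR_sub _ _

lemma relEntropy_self (A : Mat n) : relEntropy A A = 0 := by simp [relEntropy, traceR]

lemma relEntropy_zero_left (B : Mat n) : relEntropy 0 B = 0 := by simp [relEntropy, traceR]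

lemma relEntropy_eq_jointTrace {A B : Mat n} (hA : A.IsHermitian) (hB : B.IsHermitian) :
    relEntropy A B = jointTrace hA hB fun p q => p * (Real.log p - Real.log q) := by
  simp only [mul_sub, jointTrace_sub]
  rw [relEntropy_eq_sub, mul_mlog hA, traceR_cfc_left hA hB, mlog, traceR_mul_cfc hA hB]

section ResolventForm

/-- For `s > 0` and positive semidefinite `A`, `B` the supremum of this form over `X` is
`⟨A, (L_B + s R_A)⁻¹ A⟩`; it is additive in `(A, B)`, which makes the supremum subadditive. -/
def resolventForm (s : ℝ) (X A B : Mat n) : ℝ :=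
  2 * traceR (Xᴴ * A) - traceR (Xᴴ * B * X) - s * traceR (Xᴴ * X * A)

lemma resolventForm_add (s : ℝ) (X A₁ A₂ B₁ B₂ : Mat n) :
    resolventForm s X (A₁ + A₂) (B₁ + B₂) =
      resolventForm s X A₁ B₁ + resolventForm s X A₂ B₂ := by
  simp only [resolventForm, Matrix.mul_add, Matrix.add_mul, traceR_add]
  ring

lemma resolventForm_eq_sum {A B : Mat n} (hA : A.IsHermitian) (hB : B.IsHermitian) (s : ℝ)
    (X : Mat n) :
    resolventForm s X A B = ∑ i, ∑ j, (2 * hA.eigenvalues i *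
        (star (eigenbasisMatrix hA hB X j i) * eigenbasisMatrix hA hB 1 j i).re -
      (hB.eigenvalues j + s * hA.eigenvalues i) *
        Complex.normSq (eigenbasisMatrix hA hB X j i)) := by
  have hA_one := cfc_const_one ℝ A hA.isSelfAdjoint
  have hB_one := cfc_const_one ℝ B hB.isSelfAdjoint
  have hA_id := cfc_id' ℝ A hA.isSelfAdjoint
  have hB_id := cfc_id' ℝ B hB.isSelfAdjoint
  have hlin := traceR_conjTranspose_mul_cfc_mul_mul_cfc hA hB X 1 (fun p => p) fun _ => 1
  have hrow := traceR_conjTranspose_mul_cfc_mul_mul_cfc hA hB X X (fun _ => 1) fun q => q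
  have hcol := traceR_conjTranspose_mul_cfc_mul_mul_cfc hA hB X X (fun p => p) fun _ => 1
  rw [hA_id, hB_one, Matrix.mul_one, Matrix.mul_one] at hlin
  rw [hA_one, hB_id, Matrix.mul_one] at hrow
  rw [hA_id, hB_one, Matrix.mul_one] at hcol
  rw [resolventForm, hlin, hrow, hcol]
  simp only [Finset.mul_sum, ← Finset.sum_sub_distrib, Complex.star_def,
    ← Complex.normSq_eq_conj_mul_self, Complex.ofReal_re]
  exact Finset.sum_congr rfl fun i _ => Finset.sum_congr rfl fun j _ => by ring

lemma two_mul_re_sub_le_normSq_mul (y m : ℂ) {p r : ℝ} (hr : 0 ≤ r) (hpr : r = 0 → p = 0) :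
    2 * p * (star y * m).re - r * Complex.normSq y ≤ Complex.normSq m * (p ^ 2 / r) := by
  rcases hr.eq_or_lt with rfl | hr
  · simp [hpr rfl]
  · have hsq : Complex.normSq m * (p ^ 2 / r) -
        (2 * p * (star y * m).re - r * Complex.normSq y) =
        r * Complex.normSq (y - ((p / r : ℝ) : ℂ) * m) := by
      simp only [Complex.normSq_apply, Complex.star_def, Complex.mul_re, Complex.mul_im,
        Complex.sub_re, Complex.sub_im, Complex.conj_re, Complex.conj_im, Complex.ofReal_re,
        Complex.ofReal_im]
      field_simp
      ring
    linarith [mul_nonneg hr.le (Complex.normSq_nonneg (y - ((p / r : ℝ) : ℂ) * m))]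

lemma two_mul_re_sub_eq_normSq_mul (m : ℂ) {p r : ℝ} (hpr : r = 0 → p = 0) :
    2 * p * (star (((p / r : ℝ) : ℂ) * m) * m).re - r * Complex.normSq (((p / r : ℝ) : ℂ) * m) =
      Complex.normSq m * (p ^ 2 / r) := by
  rcases eq_or_ne r 0 with rfl | hr
  · simp [hpr rfl]
  · simp only [Complex.normSq_apply, Complex.star_def, Complex.mul_re, Complex.mul_im,
      Complex.conj_re, Complex.conj_im, Complex.ofReal_re, Complex.ofReal_im]
    field_simp
    ring

variable {A B : Mat n} (hA : A.PosSemidef) (hB : B.PosSemidef) {s : ℝ} (hs : 0 < s)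
include hs

lemma resolventForm_le_jointTrace (X : Mat n) :
    resolventForm s X A B ≤ jointTrace hA.1 hB.1 fun p q => p ^ 2 / (q + s * p) := by
  rw [resolventForm_eq_sum hA.1 hB.1]
  refine Finset.sum_le_sum fun i _ => Finset.sum_le_sum fun j _ => ?_
  have hp := hA.eigenvalues_nonneg i
  have hq := hB.eigenvalues_nonneg j
  exact two_mul_re_sub_le_normSq_mul _ _ (by positivity) fun h0 => by nlinarith

lemma exists_resolventForm_eq_jointTrace :
    ∃ X, resolventForm s X A B = jointTrace hA.1 hB.1 fun p q => p ^ 2 / (q + s * p) := by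
  refine ⟨(hB.1.eigenvectorUnitary : Mat n) *
    Matrix.of (fun j i => ((hA.1.eigenvalues i / (hB.1.eigenvalues j + s * hA.1.eigenvalues i) :
      ℝ) : ℂ) * eigenbasisMatrix hA.1 hB.1 1 j i) * (hA.1.eigenvectorUnitary : Mat n)ᴴ, ?_⟩
  rw [resolventForm_eq_sum hA.1 hB.1, eigenbasisMatrix_mul_mul]
  refine Finset.sum_congr rfl fun i _ => Finset.sum_congr rfl fun j _ => ?_
  have hp := hA.eigenvalues_nonneg i
  have hq := hB.eigenvalues_nonneg j
  exact two_mul_re_sub_eq_normSq_mul _ fun h0 => by nlinarith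

end ResolventForm

section JointSubadditivity

/-- The truncation `∫₀ᵀ (p² / (q + t p) - p / (1 + t)) dt`, in closed form, of the integral
representation of `p (log p - log q)`. -/
def truncatedEntropy (T p q : ℝ) : ℝ :=
  p * (Real.log (q + T * p) - Real.log q - Real.log (1 + T))

lemma truncatedEntropy_zero (p q : ℝ) : truncatedEntropy 0 p q = 0 := by
  simp [truncatedEntropy]

lemma IsSupportedPair.hasDerivAt_truncatedEntropy {p q T : ℝ} (h : IsSupportedPair p q)
    (hT : 0 ≤ T) :
    HasDerivAt (fun t => truncatedEntropy t p q) (p ^ 2 / (q + T * p) - p * (1 + T)⁻¹) T := by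
  obtain ⟨hp, hq, hqp⟩ := h
  rcases hq.eq_or_lt' with rfl | hq
  · simpa [truncatedEntropy, hqp rfl] using hasDerivAt_const T (0 : ℝ)
  · have hlin : HasDerivAt (fun t : ℝ => q + t * p) p T := by
      simpa using ((hasDerivAt_id T).mul_const p).const_add q
    have hone : HasDerivAt (fun t : ℝ => 1 + t) 1 T := (hasDerivAt_id T).const_add 1
    refine ((((hlin.log (by positivity)).sub_const (Real.log q)).sub
      (hone.log (by positivity))).const_mul p).congr_deriv ?_
    ring

lemma tendsto_truncatedEntropy {p : ℝ} (q : ℝ) (hp : 0 ≤ p) :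
    Filter.Tendsto (fun T => truncatedEntropy T p q) Filter.atTop
      (nhds (p * (Real.log p - Real.log q))) := by
  rcases hp.eq_or_lt with rfl | hp
  · simp [truncatedEntropy]
  have hratio : Filter.Tendsto (fun T : ℝ => (q - p) * (1 + T)⁻¹ + p) Filter.atTop (nhds p) := by
    simpa using ((tendsto_inv_atTop_zero.comp
      (Filter.tendsto_atTop_add_const_left _ (1 : ℝ) Filter.tendsto_id)).const_mul
        (q - p)).add_const p
  refine (((hratio.log hp.ne').sub_const (Real.log q)).const_mul p).congr' ?_
  filter_upwards [Filter.eventually_gt_atTop 0,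
    Filter.tendsto_id.atTop_mul_const hp |>.eventually_gt_atTop (-q)] with T hT hqT
  have hnum : 0 < q + T * p := by simp only [id] at hqT; linarith
  have hden : 0 < 1 + T := by linarith
  have heq : (q - p) * (1 + T)⁻¹ + p = (q + T * p) / (1 + T) := by
    field_simp
    ring
  rw [truncatedEntropy, heq, Real.log_div hnum.ne' hden.ne']
  ring

lemma jointTrace_resolvent_add_le {A₁ A₂ B₁ B₂ : Mat n} (hA₁ : A₁.PosSemidef)
    (hA₂ : A₂.PosSemidef) (hB₁ : B₁.PosSemidef) (hB₂ : B₂.PosSemidef) {s : ℝ} (hs : 0 < s) :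
    jointTrace (hA₁.add hA₂).1 (hB₁.add hB₂).1 (fun p q => p ^ 2 / (q + s * p)) ≤
      jointTrace hA₁.1 hB₁.1 (fun p q => p ^ 2 / (q + s * p)) +
        jointTrace hA₂.1 hB₂.1 (fun p q => p ^ 2 / (q + s * p)) := by
  obtain ⟨X, hX⟩ := exists_resolventForm_eq_jointTrace (hA₁.add hA₂) (hB₁.add hB₂) hs
  rw [← hX, resolventForm_add]
  exact add_le_add (resolventForm_le_jointTrace hA₁ hB₁ hs X)
    (resolventForm_le_jointTrace hA₂ hB₂ hs X)

lemma hasDerivAt_jointTrace_truncatedEntropy {A B : Mat n} (hA : A.PosSemidef)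
    (hB : B.PosSemidef) (h : suppLe A B) {T : ℝ} (hT : 0 ≤ T) :
    HasDerivAt (fun t => jointTrace hA.1 hB.1 (truncatedEntropy t))
      (jointTrace hA.1 hB.1 (fun p q => p ^ 2 / (q + T * p)) - traceR A * (1 + T)⁻¹) T := by
  refine (hasDerivAt_jointTrace hA hB h fun p q hpq =>
    hpq.hasDerivAt_truncatedEntropy hT).congr_deriv ?_
  rw [traceR_eq_jointTrace_left hA.1 hB.1, jointTrace_sub, mul_comm, ← jointTrace_const_mul]
  simp only [mul_comm]

lemma tendsto_jointTrace_truncatedEntropy {A B : Mat n} (hA : A.PosSemidef)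
    (hB : B.PosSemidef) (h : suppLe A B) :
    Filter.Tendsto (fun T => jointTrace hA.1 hB.1 (truncatedEntropy T)) Filter.atTop
      (nhds (relEntropy A B)) := by
  rw [relEntropy_eq_jointTrace hA.1 hB.1]
  exact tendsto_jointTrace hA hB h fun p q hpq => tendsto_truncatedEntropy q hpq.1

theorem relEntropy_add_le {A₁ A₂ B₁ B₂ : Mat n} (hA₁ : A₁.PosSemidef) (hA₂ : A₂.PosSemidef)
    (hB₁ : B₁.PosSemidef) (hB₂ : B₂.PosSemidef) (h₁ : suppLe A₁ B₁) (h₂ : suppLe A₂ B₂) :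
    relEntropy (A₁ + A₂) (B₁ + B₂) ≤ relEntropy A₁ B₁ + relEntropy A₂ B₂ := by
  have hA := hA₁.add hA₂
  have hB := hB₁.add hB₂
  have h := h₁.add h₂ hB₁ hB₂
  let gap (T : ℝ) : ℝ := jointTrace hA₁.1 hB₁.1 (truncatedEntropy T) +
    jointTrace hA₂.1 hB₂.1 (truncatedEntropy T) - jointTrace hA.1 hB.1 (truncatedEntropy T)
  have hderiv {T : ℝ} (hT : 0 ≤ T) : HasDerivAt gap _ T :=
    ((hasDerivAt_jointTrace_truncatedEntropy hA₁ hB₁ h₁ hT).add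
      (hasDerivAt_jointTrace_truncatedEntropy hA₂ hB₂ h₂ hT)).sub
      (hasDerivAt_jointTrace_truncatedEntropy hA hB h hT)
  have hmono : MonotoneOn gap (Set.Ici 0) := by
    refine monotoneOn_of_hasDerivWithinAt_nonneg (convex_Ici 0)
      (fun T hT => (hderiv hT).continuousAt.continuousWithinAt)
      (fun T hT => (hderiv (interior_subset hT)).hasDerivWithinAt) fun T hT => ?_
    rw [interior_Ici] at hT
    have hres := jointTrace_resolvent_add_le hA₁ hA₂ hB₁ hB₂ hT
    rw [traceR_add, add_mul]
    linarith
  have hzero : gap 0 = 0 := by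
    simp only [gap, jointTrace, truncatedEntropy_zero, mul_zero, Finset.sum_const_zero, add_zero,
      sub_zero]
  have hlim : Filter.Tendsto gap Filter.atTop
      (nhds (relEntropy A₁ B₁ + relEntropy A₂ B₂ - relEntropy (A₁ + A₂) (B₁ + B₂))) :=
    ((tendsto_jointTrace_truncatedEntropy hA₁ hB₁ h₁).add
      (tendsto_jointTrace_truncatedEntropy hA₂ hB₂ h₂)).sub
      (tendsto_jointTrace_truncatedEntropy hA hB h)
  refine sub_nonneg.1 (ge_of_tendsto hlim ?_)
  filter_upwards [Filter.eventually_ge_atTop 0] with T hT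
  exact hzero ▸ hmono Set.self_mem_Ici hT hT

end JointSubadditivity

theorem sub_le_relEntropy {A B : Mat n} (hA : A.PosSemidef) (hB : B.PosSemidef)
    (h : suppLe A B) : traceR A - traceR B ≤ relEntropy A B := by
  rw [traceR_eq_jointTrace_left hA.1 hB.1, traceR_eq_jointTrace_right hA.1 hB.1,
    ← jointTrace_sub, relEntropy_eq_jointTrace hA.1 hB.1]
  refine jointTrace_mono hA hB h fun p q ⟨hp, hq, hqp⟩ => ?_
  rcases hp.eq_or_lt with rfl | hp
  · simpa using hq
  have hq' : 0 < q := hq.lt_of_ne' fun hq0 => hp.ne' (hqp hq0)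
  have hlog := Real.log_le_sub_one_of_pos (div_pos hq' hp)
  rw [Real.log_div hq'.ne' hp.ne'] at hlog
  calc p - q = -(p * (q / p - 1)) := by field_simp; ring
    _ ≤ -(p * (Real.log q - Real.log p)) := neg_le_neg (mul_le_mul_of_nonneg_left hlog hp.le)
    _ = p * (Real.log p - Real.log q) := by ring

lemma IsDensity.relEntropy_nonneg {ρ τ : Mat n} (hρ : IsDensity ρ) (hτ : IsDensity τ)
    (h : suppLe ρ τ) : 0 ≤ relEntropy ρ τ := by
  simpa [hρ.traceR_eq_one, hτ.traceR_eq_one] using sub_le_relEntropy hρ.1 hτ.1 h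

lemma traceR_mul_mlog_smul {A B : Mat n} (hA : A.PosSemidef) (hB : B.PosSemidef)
    (h : suppLe A B) {c : ℝ} (hc : c ≠ 0) :
    traceR (A * mlog (c • B)) = traceR (A * mlog B) + Real.log c * traceR A := by
  have hlog : mlog (c • B) = cfc (fun x => Real.log (c * x)) B :=
    (cfc_comp_const_mul c Real.log B (continuousOn_image_spectrum _ _ _) hB.1.isSelfAdjoint).symm
  rw [hlog, mlog, traceR_mul_cfc hA.1 hB.1, traceR_mul_cfc hA.1 hB.1,
    traceR_eq_jointTrace_left hA.1 hB.1, ← jointTrace_const_mul, ← jointTrace_add]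
  refine jointTrace_congr hA hB h fun p q ⟨_, _, hqp⟩ => ?_
  rcases eq_or_ne q 0 with rfl | hq
  · simp [hqp rfl]
  · rw [Real.log_mul hc hq]
    ring

lemma relEntropy_smul_left {A : Mat n} (hA : A.PosSemidef) (B : Mat n) (c : ℝ) :
    relEntropy (c • A) B = c * relEntropy A B + c * Real.log c * traceR A := by
  rcases eq_or_ne c 0 with rfl | hc
  · simp [relEntropy_zero_left]
  · have hself := traceR_mul_mlog_smul hA hA (fun _ hv => hv) hc
    simp only [relEntropy_eq_sub, smul_mul_assoc, traceR_smul, hself]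
    ring

lemma relEntropy_smul {A B : Mat n} (hA : A.PosSemidef) (hB : B.PosSemidef) (h : suppLe A B)
    (c : ℝ) : relEntropy (c • A) (c • B) = c * relEntropy A B := by
  rcases eq_or_ne c 0 with rfl | hc
  · simp [relEntropy_zero_left]
  · rw [relEntropy_smul_left hA, relEntropy_eq_sub A (c • B), traceR_mul_mlog_smul hA hB h hc,
      relEntropy_eq_sub]
    ring

theorem relEntropy_jointly_convex {A₁ A₂ B₁ B₂ : Mat n} (hA₁ : A₁.PosSemidef)
    (hA₂ : A₂.PosSemidef) (hB₁ : B₁.PosSemidef) (hB₂ : B₂.PosSemidef) (h₁ : suppLe A₁ B₁)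
    (h₂ : suppLe A₂ B₂) {a b : ℝ} (ha : 0 ≤ a) (hb : 0 ≤ b) :
    relEntropy (a • A₁ + b • A₂) (a • B₁ + b • B₂) ≤
      a * relEntropy A₁ B₁ + b * relEntropy A₂ B₂ := by
  rw [← relEntropy_smul hA₁ hB₁ h₁, ← relEntropy_smul hA₂ hB₂ h₂]
  exact relEntropy_add_le (hA₁.smul ha) (hA₂.smul hb) (hB₁.smul ha) (hB₂.smul hb) (h₁.smul a)
    (h₂.smul b)

lemma relEntropy_add_self_nonpos {A B : Mat n} (hA : A.PosSemidef) (hB : B.PosSemidef) :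
    relEntropy A (A + B) ≤ 0 := by
  simpa [relEntropy_self, relEntropy_zero_left] using
    relEntropy_add_le hA .zero hA hB (fun _ hv => hv) fun v _ => zero_mulVec v

lemma add_le_relEntropy_add_left {A B : Mat n} (hA : A.PosSemidef) (hB : B.PosSemidef)
    (τ : Mat n) : relEntropy A τ + relEntropy B τ ≤ relEntropy (A + B) τ := by
  have hA' := relEntropy_add_self_nonpos hA hB
  have hB' := relEntropy_add_self_nonpos hB hA
  rw [add_comm B A] at hB'
  simp only [relEntropy_eq_sub, Matrix.add_mul, traceR_add] at hA' hB' ⊢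
  linarith

lemma relEntropy_almost_concave {σ ω : Mat n} (hσ : IsDensity σ) (hω : IsDensity ω) (τ : Mat n)
    {a b : ℝ} (ha : 0 ≤ a) (hb : 0 ≤ b) (hab : a + b = 1) :
    a * relEntropy σ τ + b * relEntropy ω τ ≤
      relEntropy (a • σ + b • ω) τ + Real.binEntropy b := by
  have h := add_le_relEntropy_add_left (hσ.1.smul ha) (hω.1.smul hb) τ
  rw [relEntropy_smul_left hσ.1, relEntropy_smul_left hω.1, hσ.traceR_eq_one,
    hω.traceR_eq_one] at h
  rw [Real.binEntropy_eq_negMulLog_add_negMulLog_one_sub, ← eq_sub_of_add_eq hab, Real.negMulLog,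
    Real.negMulLog]
  linarith

lemma suppLe_of_smul_add_smul_eq {ρ σ ω ω' τ₁ τ₂ : Mat n} (hσ : σ.PosSemidef)
    (hω' : ω'.PosSemidef) (hτ₁ : τ₁.PosSemidef) (hτ₂ : τ₂.PosSemidef) (h₁ : suppLe ρ τ₁)
    (h₂ : suppLe ω τ₂) {a b : ℝ} (ha : 0 < a) (hb : 0 ≤ b)
    (hmix : a • ρ + b • ω = a • σ + b • ω') : suppLe σ (a • τ₁ + b • τ₂) := by
  have hσmix := (suppLe_smul_right σ ha.ne').trans (suppLe_add_right (hσ.smul ha.le)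
    (hω'.smul hb))
  rw [← hmix] at hσmix
  exact hσmix.trans ((h₁.smul a).add (h₂.smul b) (hτ₁.smul ha.le) (hτ₂.smul hb))

theorem mul_relEntropy_le_of_smul_add_smul_eq {ρ σ ω ω' τ₁ τ₂ : Mat n} (hρ : ρ.PosSemidef)
    (hσ : IsDensity σ) (hω : ω.PosSemidef) (hω' : IsDensity ω') (hτ₁ : IsDensity τ₁)
    (hτ₂ : IsDensity τ₂) (h₁ : suppLe ρ τ₁) (h₂ : suppLe ω τ₂) {a b : ℝ} (ha : 0 ≤ a)
    (hb : 0 ≤ b) (hab : a + b = 1) (hmix : a • ρ + b • ω = a • σ + b • ω') :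
    a * relEntropy σ (a • τ₁ + b • τ₂) ≤
      a * relEntropy ρ τ₁ + b * relEntropy ω τ₂ + Real.binEntropy b := by
  have hτ : IsDensity (a • τ₁ + b • τ₂) := convex_isDensity hτ₁ hτ₂ ha hb hab
  have hω'_nonneg : 0 ≤ b * relEntropy ω' (a • τ₁ + b • τ₂) := by
    rcases hb.eq_or_lt with rfl | hb
    · rw [zero_mul]
    · refine mul_nonneg hb.le (hω'.relEntropy_nonneg hτ ?_)
      rw [add_comm] at hmix ⊢
      exact suppLe_of_smul_add_smul_eq hω'.1 hσ.1 hτ₂.1 hτ₁.1 h₂ h₁ hb ha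
        (hmix.trans (add_comm _ _))
  calc a * relEntropy σ (a • τ₁ + b • τ₂)
      ≤ a * relEntropy σ (a • τ₁ + b • τ₂) + b * relEntropy ω' (a • τ₁ + b • τ₂) :=
        le_add_of_nonneg_right hω'_nonneg
    _ ≤ relEntropy (a • σ + b • ω') (a • τ₁ + b • τ₂) + Real.binEntropy b :=
        relEntropy_almost_concave hσ hω' _ ha hb hab
    _ = relEntropy (a • ρ + b • ω) (a • τ₁ + b • τ₂) + Real.binEntropy b := by rw [hmix]
    _ ≤ a * relEntropy ρ τ₁ + b * relEntropy ω τ₂ + Real.binEntropy b := by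
        gcongr
        exact relEntropy_jointly_convex hρ hω hτ₁.1 hτ₂.1 h₁ h₂ ha hb

section DistanceToSet

variable {S : Set (Mat n)} {ρ σ ω ω' : Mat n}

lemma Dp_one_of_suppLe {τ : Mat n} (h : suppLe ρ τ) : Dp 1 ρ τ = (relEntropy ρ τ : EReal) := by
  simp [Dp, DU, h, relEntropy]

lemma Dp_one_of_not_suppLe {τ : Mat n} (h : ¬ suppLe ρ τ) : Dp 1 ρ τ = ⊤ := by
  simp [Dp, DU, h]

lemma DpSet_one_nonneg (S : Set (Mat n)) (hρ : IsDensity ρ) : 0 ≤ DpSet 1 ρ S := by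
  refine le_iInf₂ fun τ hτ => ?_
  by_cases h : suppLe ρ τ
  · rw [Dp_one_of_suppLe h]
    exact_mod_cast hρ.relEntropy_nonneg hτ.2 h
  · simp [Dp_one_of_not_suppLe h]

lemma DpSet_le_DpRel_univ (p : ℝ≥0∞) (S : Set (Mat n)) (hρ : IsDensity ρ) :
    DpSet p ρ S ≤ DpRel p Set.univ S :=
  le_iSup₂ (f := fun ρ (_ : ρ ∈ {ρ ∈ Set.univ | IsDensity ρ}) => DpSet p ρ S) ρ
    ⟨Set.mem_univ ρ, hρ⟩

lemma DpSet_one_ne_bot (S : Set (Mat n)) (hρ : IsDensity ρ) : DpSet 1 ρ S ≠ ⊥ :=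
  (EReal.bot_lt_zero.trans_le (DpSet_one_nonneg S hρ)).ne'

lemma toReal_DpSet_one_le_relEntropy {τ : Mat n} (hρ : IsDensity ρ) (hτS : τ ∈ S)
    (hτ : IsDensity τ) (h : suppLe ρ τ) : (DpSet 1 ρ S).toReal ≤ relEntropy ρ τ := by
  have hle : DpSet 1 ρ S ≤ (relEntropy ρ τ : EReal) :=
    Dp_one_of_suppLe h ▸ iInf₂_le τ ⟨hτS, hτ⟩
  exact EReal.toReal_le_toReal hle (DpSet_one_ne_bot S hρ) (EReal.coe_ne_top _)

lemma exists_relEntropy_lt_toReal_DpSet_one_add (hρ : IsDensity ρ) (hfin : DpSet 1 ρ S ≠ ⊤)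
    {κ : ℝ} (hκ : 0 < κ) :
    ∃ τ ∈ S, IsDensity τ ∧ suppLe ρ τ ∧ relEntropy ρ τ < (DpSet 1 ρ S).toReal + κ := by
  have hlt : DpSet 1 ρ S < ((DpSet 1 ρ S).toReal + κ : ℝ) := by
    nth_rw 1 [← EReal.coe_toReal hfin (DpSet_one_ne_bot S hρ)]
    exact_mod_cast lt_add_of_pos_right _ hκ
  simp only [DpSet, iInf_lt_iff] at hlt
  obtain ⟨τ, ⟨hτS, hτ⟩, hlt⟩ := hlt
  by_cases h : suppLe ρ τ
  · rw [Dp_one_of_suppLe h] at hlt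
    exact ⟨τ, hτS, hτ, h, by exact_mod_cast hlt⟩
  · simp [Dp_one_of_not_suppLe h] at hlt

theorem mul_toReal_DpSet_one_le (hS : Convex ℝ S) (hfin : DpRel 1 Set.univ S < ⊤)
    (hρ : IsDensity ρ) (hσ : IsDensity σ) (hω : IsDensity ω) (hω' : IsDensity ω') {a b : ℝ}
    (ha : 0 < a) (hb : 0 ≤ b) (hab : a + b = 1) (hmix : a • ρ + b • ω = a • σ + b • ω') :
    a * (DpSet 1 σ S).toReal ≤
      a * (DpSet 1 ρ S).toReal + b * (DpRel 1 Set.univ S).toReal + Real.binEntropy b := by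
  refine le_of_forall_pos_le_add fun κ hκ => ?_
  have hρ_fin := ((DpSet_le_DpRel_univ 1 S hρ).trans_lt hfin).ne
  have hω_fin := ((DpSet_le_DpRel_univ 1 S hω).trans_lt hfin).ne
  have hω_le : (DpSet 1 ω S).toReal ≤ (DpRel 1 Set.univ S).toReal :=
    EReal.toReal_le_toReal (DpSet_le_DpRel_univ 1 S hω) (DpSet_one_ne_bot S hω) hfin.ne
  obtain ⟨τ₁, hτ₁S, hτ₁, h₁, hlt₁⟩ := exists_relEntropy_lt_toReal_DpSet_one_add hρ hρ_fin hκ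
  obtain ⟨τ₂, hτ₂S, hτ₂, h₂, hlt₂⟩ := exists_relEntropy_lt_toReal_DpSet_one_add hω hω_fin hκ
  calc a * (DpSet 1 σ S).toReal ≤ a * relEntropy σ (a • τ₁ + b • τ₂) := by
        refine mul_le_mul_of_nonneg_left (toReal_DpSet_one_le_relEntropy hσ
          (hS hτ₁S hτ₂S ha.le hb hab) (convex_isDensity hτ₁ hτ₂ ha.le hb hab) ?_) ha.le
        exact suppLe_of_smul_add_smul_eq hσ.1 hω'.1 hτ₁.1 hτ₂.1 h₁ h₂ ha hb hmix
    _ ≤ a * relEntropy ρ τ₁ + b * relEntropy ω τ₂ + Real.binEntropy b :=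
        mul_relEntropy_le_of_smul_add_smul_eq hρ.1 hσ hω.1 hω' hτ₁ hτ₂ h₁ h₂ ha.le hb hab hmix
    _ ≤ a * ((DpSet 1 ρ S).toReal + κ) + b * ((DpRel 1 Set.univ S).toReal + κ) +
          Real.binEntropy b := by
        gcongr
        exact hlt₂.le.trans (by gcongr)
    _ = a * (DpSet 1 ρ S).toReal + b * (DpRel 1 Set.univ S).toReal + Real.binEntropy b +
          (a + b) * κ := by ring
    _ = a * (DpSet 1 ρ S).toReal + b * (DpRel 1 Set.univ S).toReal + Real.binEntropy b + κ := by
        rw [hab, one_mul]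

end DistanceToSet

section TraceNorm

open scoped MatrixOrder

lemma snorm_one_eq_traceR_abs (x : Mat n) : snorm 1 x = traceR (CFC.abs x) := by
  have hx : 0 ≤ star x * x := star_mul_self_nonneg x
  rw [snorm, CFC.abs, CFC.sqrt_eq_real_sqrt (star x * x) hx,
    cfcₙ_eq_cfc (hf := Real.continuous_sqrt.continuousOn), mpow, star_eq_conjTranspose]
  simp only [div_one, Real.rpow_one, ← Real.sqrt_eq_rpow]

lemma snorm_one_nonneg (x : Mat n) : 0 ≤ snorm 1 x := by
  rw [snorm_one_eq_traceR_abs]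
  exact traceR_nonneg (Matrix.nonneg_iff_posSemidef.1 (CFC.abs_nonneg x))

lemma exists_isDensity_eq_traceR_smul {P : Mat n} (hP : P.PosSemidef)
    (hn : ∃ ρ : Mat n, IsDensity ρ) : ∃ ω, IsDensity ω ∧ P = traceR P • ω := by
  rcases eq_or_ne (traceR P) 0 with h0 | h0
  · obtain ⟨ρ, hρ⟩ := hn
    refine ⟨ρ, hρ, ?_⟩
    rw [h0, zero_smul, ← hP.trace_eq_zero_iff, trace_eq_ofReal_traceR hP, h0, Complex.ofReal_zero]
  · have hpos := hP.smul (inv_nonneg.2 (traceR_nonneg hP))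
    refine ⟨(traceR P)⁻¹ • P, ⟨hpos, ?_⟩, (smul_inv_smul₀ h0 P).symm⟩
    rw [trace_eq_ofReal_traceR hpos, traceR_smul, inv_mul_cancel₀ h0, Complex.ofReal_one]

lemma exists_isDensity_add_smul_eq {ρ σ : Mat n} (hρ : IsDensity ρ) (hσ : IsDensity σ) :
    ∃ ω ω', IsDensity ω ∧ IsDensity ω' ∧
      ρ + (snorm 1 (ρ - σ) / 2) • ω = σ + (snorm 1 (ρ - σ) / 2) • ω' := by
  have hx : IsSelfAdjoint (ρ - σ) := (hρ.1.1.sub hσ.1.1).isSelfAdjoint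
  have hdiff : (ρ - σ)⁺ - (ρ - σ)⁻ = ρ - σ := CFC.posPart_sub_negPart (ρ - σ) hx
  have htr_sub : traceR (ρ - σ)⁺ - traceR (ρ - σ)⁻ = 0 := by
    rw [← traceR_sub, hdiff, traceR_sub, hρ.traceR_eq_one, hσ.traceR_eq_one, sub_self]
  have htr_add : traceR (ρ - σ)⁺ + traceR (ρ - σ)⁻ = snorm 1 (ρ - σ) := by
    rw [← traceR_add, CFC.posPart_add_negPart (ρ - σ) hx, snorm_one_eq_traceR_abs]
  obtain ⟨ω, hω, hneg⟩ := exists_isDensity_eq_traceR_smul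
    (Matrix.nonneg_iff_posSemidef.1 (CFC.negPart_nonneg (ρ - σ))) ⟨ρ, hρ⟩
  obtain ⟨ω', hω', hpos⟩ := exists_isDensity_eq_traceR_smul
    (Matrix.nonneg_iff_posSemidef.1 (CFC.posPart_nonneg (ρ - σ))) ⟨ρ, hρ⟩
  refine ⟨ω, ω', hω, hω', ?_⟩
  rw [show traceR (ρ - σ)⁻ = snorm 1 (ρ - σ) / 2 by linarith] at hneg
  rw [show traceR (ρ - σ)⁺ = snorm 1 (ρ - σ) / 2 by linarith] at hpos
  rw [← hneg, ← hpos, add_comm σ, ← sub_eq_sub_iff_add_eq_add, hdiff]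

end TraceNorm

lemma one_add_mul_binEntropy_div_one_add {δ : ℝ} (hδ : 0 ≤ δ) :
    (1 + δ) * Real.binEntropy (δ / (1 + δ)) = (1 + δ) * Real.log (1 + δ) - δ * Real.log δ := by
  have hδ' : 1 + δ ≠ 0 := by positivity
  have hcompl : 1 - δ / (1 + δ) = (1 + δ)⁻¹ := by
    field_simp
    ring
  rw [Real.binEntropy, hcompl, inv_inv, inv_div]
  rcases hδ.eq_or_lt with rfl | hδ
  · simp
  · rw [Real.log_div hδ' hδ.ne']
    field_simp
    ring

lemma monotoneOn_mul_add_one_add_mul_binEntropy {D : ℝ} (hD : 0 ≤ D) :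
    MonotoneOn (fun δ => δ * D + (1 + δ) * Real.binEntropy (δ / (1 + δ))) (Set.Ici 0) := by
  have hmono : MonotoneOn (fun δ : ℝ => (1 + δ) * Real.log (1 + δ) - δ * Real.log δ)
      (Set.Ici 0) := by
    have hcont : Continuous fun δ : ℝ => (1 + δ) * Real.log (1 + δ) - δ * Real.log δ :=
      (Real.continuous_mul_log.comp (continuous_const.add continuous_id)).sub
        Real.continuous_mul_log
    refine monotoneOn_of_hasDerivWithinAt_nonneg (f' := fun δ => Real.log (1 + δ) - Real.log δ)
      (convex_Ici 0) hcont.continuousOn (fun δ hδ => ?_) fun δ hδ => ?_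
    all_goals rw [interior_Ici, Set.mem_Ioi] at hδ
    · have hshift : HasDerivAt (fun t : ℝ => 1 + t) 1 δ := (hasDerivAt_id δ).const_add 1
      have hleft := (Real.hasDerivAt_mul_log (by positivity : 1 + δ ≠ 0)).comp δ hshift
      exact ((hleft.sub (Real.hasDerivAt_mul_log hδ.ne')).congr_deriv (by ring)).hasDerivWithinAt
    · exact sub_nonneg.2 (Real.log_le_log hδ (by linarith))
  intro x hx y hy hxy
  simp only [one_add_mul_binEntropy_div_one_add hx, one_add_mul_binEntropy_div_one_add hy]
  exact add_le_add (mul_le_mul_of_nonneg_right hxy hD) (hmono hx hy hxy)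

theorem toReal_DpSet_one_sub_le {S : Set (Mat n)} (hS : Convex ℝ S)
    (hfin : DpRel 1 Set.univ S < ⊤) {ρ σ ω ω' : Mat n} (hρ : IsDensity ρ) (hσ : IsDensity σ)
    (hω : IsDensity ω) (hω' : IsDensity ω') {δ : ℝ} (hδ : 0 ≤ δ)
    (hmix : ρ + δ • ω = σ + δ • ω') :
    (DpSet 1 σ S).toReal - (DpSet 1 ρ S).toReal ≤
      δ * (DpRel 1 Set.univ S).toReal + (1 + δ) * Real.binEntropy (δ / (1 + δ)) := by
  have hδ' : 0 < 1 + δ := by positivity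
  have hweights : (1 + δ)⁻¹ + δ / (1 + δ) = 1 := by
    field_simp
  have hmix' : (1 + δ)⁻¹ • ρ + (δ / (1 + δ)) • ω = (1 + δ)⁻¹ • σ + (δ / (1 + δ)) • ω' := by
    simp only [div_eq_inv_mul, mul_smul, ← smul_add, hmix]
  have h := mul_le_mul_of_nonneg_left (mul_toReal_DpSet_one_le hS hfin hρ hσ hω hω'
    (inv_pos.2 hδ') (div_nonneg hδ hδ'.le) hweights hmix') hδ'.le
  simp only [mul_add, ← mul_assoc, mul_inv_cancel₀ hδ'.ne', mul_div_cancel₀ _ hδ'.ne',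
    one_mul] at h
  linarith

theorem statement14_general {S : Set (Mat n)} (hS : Convex ℝ S)
    (hfin : DpRel 1 Set.univ S < ⊤) {ρ σ : Mat n} (hρ : IsDensity ρ) (hσ : IsDensity σ) {ε : ℝ}
    (hε : snorm 1 (ρ - σ) = ε) :
    |(DpSet 1 ρ S).toReal - (DpSet 1 σ S).toReal| ≤
      ε / 2 * (DpRel 1 Set.univ S).toReal +
        (1 + ε / 2) * Real.binEntropy (ε / 2 / (1 + ε / 2)) := by
  have hε_nonneg : 0 ≤ ε / 2 := div_nonneg (hε ▸ snorm_one_nonneg _) zero_le_two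
  obtain ⟨ω, ω', hω, hω', hmix⟩ := exists_isDensity_add_smul_eq hρ hσ
  rw [hε] at hmix
  exact abs_sub_le_iff.2 ⟨toReal_DpSet_one_sub_le hS hfin hσ hρ hω' hω hε_nonneg hmix.symm,
    toReal_DpSet_one_sub_le hS hfin hρ hσ hω hω' hε_nonneg hmix⟩

/-- continuity of `D(·‖N)`: if `D(M_m‖N) < ∞` and `ρ, σ` are
densities with `‖ρ - σ‖₁ = ε`, then
`|D(ρ‖N) - D(σ‖N)| ≤ 2ε D(M_m‖N) + (1+2ε) h(2ε/(1+2ε))` with `h` the binary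
entropy function. -/
theorem statement14 {m : ℕ} (N : StarSubalgebra ℂ (Mat (Fin m)))
    (hfin : DpRel 1 Set.univ (N : Set (Mat (Fin m))) < ⊤)
    (ρ σ : Mat (Fin m)) (hρ : IsDensity ρ) (hσ : IsDensity σ)
    (ε : ℝ) (hε : snorm 1 (ρ - σ) = ε) :
    |(DpSet 1 ρ (N : Set (Mat (Fin m)))).toReal
        - (DpSet 1 σ (N : Set (Mat (Fin m)))).toReal| ≤
      2 * ε * (DpRel 1 Set.univ (N : Set (Mat (Fin m)))).toReal
        + (1 + 2 * ε) * Real.binEntropy (2 * ε / (1 + 2 * ε)) := by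
  have hN : Convex ℝ (N : Set (Mat (Fin m))) :=
    (N.toSubalgebra.toSubmodule.restrictScalars ℝ).convex
  have hε_nonneg : 0 ≤ ε := hε ▸ snorm_one_nonneg _
  have hD : 0 ≤ (DpRel 1 Set.univ (N : Set (Mat (Fin m)))).toReal :=
    EReal.toReal_nonneg ((DpSet_one_nonneg _ hρ).trans (DpSet_le_DpRel_univ 1 _ hρ))
  exact (statement14_general hN hfin hρ hσ hε).trans <|
    monotoneOn_mul_add_one_add_mul_binEntropy hD
      (div_nonneg hε_nonneg zero_le_two) (mul_nonneg zero_le_two hε_nonneg) (by linarith)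

end GJL
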